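/- arXiv:2104.12256 — 6 statements merged into one kernel-verified Lean document; each statement's English description precedes it below -/
import Mathlib

section
/- Let x₁,…,xₙ be distinct points of X and let g : X → ℝ be a continuous function with ∫ g² dμ ≠ 0. Then for any real numbers v₁,…,vₙ and any real number w there exists a continuous function u : X → ℝ such that u(xᵢ) = vᵢ for every i ∈ {1,…,n} and ∫ u·g dμ = w. -/
open MeasureTheory

/-!
Choose a bounded continuous `u₀` with the prescribed values at the points, and correct it by a
multiple of a bounded continuous `φ` that vanishes at the points and has `∫ φ g dμ ≠ 0`. Such a `φ`
exists: let `h` be a continuous function whose zero set is the given finite set. If all the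
integrals `∫ ψ (h g) dμ` with `ψ` bounded continuous were zero, then `h g` would vanish almost
everywhere, hence so would `g`, because the zero set of `h` is a null set.
-/

open Filter Function Set Topology
open scoped BoundedContinuousFunction

section Topology

variable {X : Type*} [TopologicalSpace X]

theorem exists_boundedContinuous_zero_iff_mem_of_isClosed [PerfectlyNormalSpace X] {s : Set X}
    (hs : IsClosed s) :
    ∃ φ : X →ᵇ ℝ, (∀ t, φ t = 0 ↔ t ∈ s) ∧ ∀ t, φ t ∈ Icc (0 : ℝ) 1 := by
  obtain ⟨f, rfl, hf⟩ := perfectlyNormalSpace_iff_forall_isClosed_preimage_zero.mp ‹_› s hs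
  have norm_f_le (t : X) : ‖f t‖ ≤ 1 := by
    simpa only [Real.norm_of_nonneg (hf t).1] using (hf t).2
  exact ⟨.ofNormedAddCommGroup f f.continuous 1 norm_f_le, fun _ ↦ Iff.rfl, hf⟩

theorem exists_boundedContinuous_tendsto_indicator_of_isClosed [PerfectlyNormalSpace X] {s : Set X}
    (hs : IsClosed s) :
    ∃ ψ : ℕ → X →ᵇ ℝ, (∀ n t, ‖ψ n t‖ ≤ 1) ∧
      ∀ t, Tendsto (fun n ↦ ψ n t) atTop (𝓝 (s.indicator 1 t)) := by
  obtain ⟨φ, hφs, hφ⟩ := exists_boundedContinuous_zero_iff_mem_of_isClosed hs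
  have one_sub_nonneg (t : X) : 0 ≤ 1 - φ t := sub_nonneg.mpr (hφ t).2
  refine ⟨fun n ↦ (1 - φ) ^ n, fun n t ↦ ?_, fun t ↦ ?_⟩
  · change ‖(1 - φ t) ^ n‖ ≤ 1
    rw [Real.norm_of_nonneg (pow_nonneg (one_sub_nonneg t) n)]
    exact pow_le_one₀ (one_sub_nonneg t) (sub_le_self 1 (hφ t).1)
  · change Tendsto (fun n ↦ (1 - φ t) ^ n) atTop _
    by_cases ht : t ∈ s
    · simp [(hφs t).mpr ht, ht]
    · have φ_pos : 0 < φ t := (hφ t).1.lt_of_ne' (mt (hφs t).mp ht)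
      rw [indicator_of_notMem ht]
      exact tendsto_pow_atTop_nhds_zero_of_lt_one (one_sub_nonneg t) (sub_lt_self 1 φ_pos)

theorem exists_boundedContinuous_apply_eq [T4Space X] {ι : Type*} [Finite ι] {x : ι → X}
    (hx : Injective x) (v : ι → ℝ) : ∃ u : X →ᵇ ℝ, ∀ i, u (x i) = v i := by
  let _ : TopologicalSpace ι := ⊥
  have : DiscreteTopology ι := ⟨rfl⟩
  have hx_embedding : IsClosedEmbedding x := continuous_of_discreteTopology.isClosedEmbedding hx
  obtain ⟨u, -, hu⟩ := BoundedContinuousFunction.exists_extension_norm_eq_of_isClosedEmbedding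
    (.mkOfCompact ⟨v, continuous_of_discreteTopology⟩) hx_embedding
  exact ⟨u, congrFun hu⟩

end Topology

section Integral

variable {X : Type*} [TopologicalSpace X] [MeasurableSpace X] {μ : Measure X}
  {E : Type*} [NormedAddCommGroup E] [NormedSpace ℝ E] {f : X → E}

theorem integrable_boundedContinuous_smul [OpensMeasurableSpace X] (φ : X →ᵇ ℝ)
    (hf : Integrable f μ) : Integrable (fun t ↦ φ t • f t) μ :=
  hf.bdd_smul ‖φ‖ φ.continuous.aestronglyMeasurable (.of_forall φ.norm_coe_le_norm)

variable [PerfectlyNormalSpace X] [BorelSpace X] [CompleteSpace E]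

theorem ae_eq_zero_of_forall_integral_boundedContinuous_smul_eq_zero (hf : Integrable f μ)
    (h : ∀ φ : X →ᵇ ℝ, ∫ t, φ t • f t ∂μ = 0) : f =ᵐ[μ] 0 := by
  refine ae_eq_zero_of_forall_setIntegral_isClosed_eq_zero hf fun s hs ↦ ?_
  obtain ⟨ψ, hψ_le, hψ_lim⟩ := exists_boundedContinuous_tendsto_indicator_of_isClosed hs
  have integral_lim : Tendsto (fun n ↦ ∫ t, ψ n t • f t ∂μ) atTop
      (𝓝 (∫ t, s.indicator (1 : X → ℝ) t • f t ∂μ)) := by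
    refine tendsto_integral_of_dominated_convergence (fun t ↦ ‖f t‖)
      (fun n ↦ (integrable_boundedContinuous_smul (ψ n) hf).aestronglyMeasurable) hf.norm
      (fun n ↦ .of_forall fun t ↦ ?_) (.of_forall fun t ↦ (hψ_lim t).smul_const (f t))
    rw [norm_smul]
    exact mul_le_of_le_one_left (norm_nonneg _) (hψ_le n t)
  have indicator_smul_eq (t : X) : s.indicator (1 : X → ℝ) t • f t = s.indicator f t := by
    by_cases ht : t ∈ s <;> simp [ht]
  simp only [h, indicator_smul_eq, integral_indicator hs.measurableSet] at integral_lim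
  exact tendsto_nhds_unique integral_lim tendsto_const_nhds

theorem exists_boundedContinuous_eqOn_zero_integral_smul_ne_zero {s : Set X} (hs : IsClosed s)
    (hμs : μ s = 0) (hf : Integrable f μ) (hf₀ : ¬ f =ᵐ[μ] 0) :
    ∃ φ : X →ᵇ ℝ, EqOn φ 0 s ∧ ∫ t, φ t • f t ∂μ ≠ 0 := by
  obtain ⟨h, hhs, -⟩ := exists_boundedContinuous_zero_iff_mem_of_isClosed hs
  contrapose! hf₀
  have smul_ae_eq_zero : (fun t ↦ h t • f t) =ᵐ[μ] 0 := by
    refine ae_eq_zero_of_forall_integral_boundedContinuous_smul_eq_zero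
      (integrable_boundedContinuous_smul h hf) fun ψ ↦ ?_
    have mul_eqOn_zero : EqOn (ψ * h) 0 s := fun t ht ↦ by simp [(hhs t).mpr ht]
    simpa only [BoundedContinuousFunction.mul_apply, mul_smul] using hf₀ (ψ * h) mul_eqOn_zero
  filter_upwards [smul_ae_eq_zero, measure_eq_zero_iff_ae_notMem.mp hμs] with t ht hts
  exact (smul_eq_zero.mp ht).resolve_left (mt (hhs t).mp hts)

end Integral

theorem stmt_0_general {X : Type*} [TopologicalSpace X] [T6Space X] [MeasurableSpace X]
    [BorelSpace X] {μ : Measure X} {ι : Type*} [Finite ι] {x : ι → X} (hx : Injective x)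
    (hμ : ∀ i, μ {x i} = 0) {g : X → ℝ} (hg : Integrable g μ) (hg₀ : ¬ g =ᵐ[μ] 0)
    (v : ι → ℝ) (w : ℝ) :
    ∃ u : X →ᵇ ℝ, (∀ i, u (x i) = v i) ∧ ∫ t, u t * g t ∂μ = w := by
  have range_null : μ (range x) = 0 := by
    rw [← iUnion_singleton_eq_range]
    exact measure_iUnion_null hμ
  obtain ⟨u₀, hu₀⟩ := exists_boundedContinuous_apply_eq hx v
  obtain ⟨φ, hφx, hφg⟩ := exists_boundedContinuous_eqOn_zero_integral_smul_ne_zero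
    (finite_range x).isClosed range_null hg hg₀
  let c : ℝ := (w - ∫ t, u₀ t • g t ∂μ) / ∫ t, φ t • g t ∂μ
  refine ⟨u₀ + c • φ, fun i ↦ ?_, ?_⟩
  · have φ_apply_eq_zero : φ (x i) = 0 := hφx (mem_range_self i)
    simp [hu₀, φ_apply_eq_zero]
  · calc ∫ t, (u₀ + c • φ) t * g t ∂μ
        = ∫ t, u₀ t • g t + c • (φ t • g t) ∂μ := by simp [add_mul, mul_assoc]
      _ = ∫ t, u₀ t • g t ∂μ + c • ∫ t, φ t • g t ∂μ := by
        rw [integral_add (integrable_boundedContinuous_smul u₀ hg)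
          ((integrable_boundedContinuous_smul φ hg).fun_smul c), integral_smul]
      _ = w := by rw [smul_eq_mul, div_mul_cancel₀ _ hφg, add_sub_cancel]

theorem stmt_0 {X : Type*} [MetricSpace X] [CompactSpace X] [Nonempty X]
    [MeasurableSpace X] [BorelSpace X]
    (μ : Measure X) [IsFiniteMeasure μ] (hμ : ∀ x : X, μ {x} = 0)
    {n : ℕ} (x : Fin n → X) (hx : Function.Injective x)
    (g : C(X, ℝ)) (hg : ∫ t, (g t) ^ 2 ∂μ ≠ 0)
    (v : Fin n → ℝ) (w : ℝ) :
    ∃ u : C(X, ℝ), (∀ i : Fin n, u (x i) = v i) ∧ ∫ t, u t * g t ∂μ = w := by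
  have hg_integrable : Integrable g μ :=
    g.continuous.integrable_of_hasCompactSupport (.of_compactSpace g)
  have hg₀ : ¬ g =ᵐ[μ] 0 := fun h ↦
    hg (integral_eq_zero_of_ae (h.mono fun t ht ↦ by simp [ht]))
  obtain ⟨u, hu⟩ := stmt_0_general hx (fun i ↦ hμ (x i)) hg_integrable hg₀ v w
  exact ⟨u.toContinuousMap, hu⟩
end

section
/- Let x₁,…,xₙ be distinct points of X, let g : X → ℝ be continuous, let r > 0, let u' : X → ℝ be continuous with sup_{x∈X} |u'(x)| ≤ r, and let v₁,…,vₙ be real numbers with |vᵢ| ≤ r for each i. Then for every ε > 0 there exists a continuous function u : X → ℝ with sup_{x∈X} |u(x)| ≤ r, u(xᵢ) = vᵢ for every i ∈ {1,…,n}, and |∫ (u' − u)·g dμ| < ε. -/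
open MeasureTheory

/-!
Extend the prescribed values to a continuous `w` with the same bound by Tietze's theorem. For a
sequence of continuous cutoffs `φₖ : X → [0, 1]` that equal `1` on the prescribed set and converge
pointwise to its indicator, `u = u' + φₖ (w - u')` keeps the bound by convexity and agrees with `w`
on the set, while `∫ (u' - u) g = ∫ φₖ (u' - w) g` tends to `0` because the set is null.
-/

open Filter Set Topology

section ClosedSets

variable {X E : Type*} [TopologicalSpace X] [HasOuterApproxClosed X]
  [MeasurableSpace X] [OpensMeasurableSpace X] {μ : Measure X}
  [NormedAddCommGroup E] [NormedSpace ℝ E] {F : Set X}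

theorem tendsto_integral_apprSeq_smul (hF : IsClosed F) {h : X → E} (hh : Integrable h μ) :
    Tendsto (fun k ↦ ∫ t, (hF.apprSeq k t : ℝ) • h t ∂μ) atTop (𝓝 (∫ t in F, h t ∂μ)) := by
  rw [← integral_indicator hF.measurableSet]
  refine tendsto_integral_of_dominated_convergence (fun t ↦ ‖h t‖)
    (fun k ↦ ?_) hh.norm (fun k ↦ .of_forall fun t ↦ ?_) (.of_forall fun t ↦ ?_)
  · have hcont : Continuous fun t ↦ (hF.apprSeq k t : ℝ) := by fun_prop
    exact hcont.aestronglyMeasurable.smul hh.aestronglyMeasurable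
  · rw [norm_smul, NNReal.norm_eq]
    exact mul_le_of_le_one_left (norm_nonneg _)
      (HasOuterApproxClosed.apprSeq_apply_le_one hF k t)
  · have hlim : Tendsto (fun k ↦ (hF.apprSeq k t : ℝ)) atTop
        (𝓝 ((F.indicator (fun _ ↦ 1) t : NNReal) : ℝ)) :=
      NNReal.tendsto_coe.2 (tendsto_pi_nhds.1 (HasOuterApproxClosed.tendsto_apprSeq hF) t)
    convert hlim.smul_const (h t) using 2
    by_cases ht : t ∈ F <;> simp [ht]

theorem exists_mem_segment_eqOn_norm_integral_sub_smul_lt (hF : IsClosed F) (hμF : μ F = 0)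
    (u' w : C(X, ℝ)) {g : X → E} (hg : Integrable (fun t ↦ (u' t - w t) • g t) μ)
    {ε : ℝ} (hε : 0 < ε) :
    ∃ u : C(X, ℝ), (∀ t, u t ∈ segment ℝ (u' t) (w t)) ∧ EqOn u w F ∧
      ‖∫ t, (u' t - u t) • g t ∂μ‖ < ε := by
  have hlim := tendsto_integral_apprSeq_smul hF hg
  rw [setIntegral_measure_zero _ hμF] at hlim
  obtain ⟨k, hk⟩ := (Metric.tendsto_nhds.1 hlim ε hε).exists
  let φ : X → ℝ := fun t ↦ hF.apprSeq k t
  have hφ : Continuous φ := by fun_prop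
  refine ⟨⟨fun t ↦ AffineMap.lineMap (u' t) (w t) (φ t), by fun_prop⟩,
    fun t ↦ ?_, fun t ht ↦ ?_, ?_⟩
  · exact lineMap_mem_segment ℝ _ _
      ⟨NNReal.coe_nonneg _, HasOuterApproxClosed.apprSeq_apply_le_one hF k t⟩
  · simp [φ, HasOuterApproxClosed.apprSeq_apply_eq_one hF k ht]
  · have hsub (t : X) : u' t - AffineMap.lineMap (u' t) (w t) (φ t) = φ t * (u' t - w t) := by
      rw [AffineMap.lineMap_apply_ring']
      ring
    simpa only [ContinuousMap.coe_mk, hsub, mul_smul, dist_zero_right] using hk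

end ClosedSets

theorem exists_continuousMap_extension_abs_le {X Y : Type*} [TopologicalSpace X] [NormalSpace X]
    [TopologicalSpace Y] {e : Y → X} (he : IsClosedEmbedding e) {r : ℝ} (hr : 0 ≤ r)
    (v : C(Y, ℝ)) (hv : ∀ y, |v y| ≤ r) :
    ∃ w : C(X, ℝ), (∀ t, |w t| ≤ r) ∧ ∀ y, w (e y) = v y := by
  obtain ⟨w, hwr, hwv⟩ := v.exists_extension_forall_mem_of_isClosedEmbedding
    (t := Icc (-r) r) (fun y ↦ abs_le.1 (hv y)) ⟨0, by simpa using hr⟩ he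
  exact ⟨w, fun t ↦ abs_le.2 (hwr t), congrFun hwv⟩

theorem stmt_1_general {X Y E : Type*} [TopologicalSpace X] [NormalSpace X]
    [HasOuterApproxClosed X] [Nonempty X] [MeasurableSpace X] [OpensMeasurableSpace X]
    [TopologicalSpace Y] [NormedAddCommGroup E] [NormedSpace ℝ E]
    {μ : Measure X} {e : Y → X} (he : IsClosedEmbedding e) (hμ : μ (range e) = 0)
    {g : X → E} (hg : Integrable g μ) {r : ℝ}
    (u' : C(X, ℝ)) (hu' : ∀ t, |u' t| ≤ r) (v : C(Y, ℝ)) (hv : ∀ y, |v y| ≤ r)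
    {ε : ℝ} (hε : 0 < ε) :
    ∃ u : C(X, ℝ), (∀ t, |u t| ≤ r) ∧ (∀ y, u (e y) = v y) ∧
      ‖∫ t, (u' t - u t) • g t ∂μ‖ < ε := by
  have hr : 0 ≤ r := (abs_nonneg _).trans (hu' (Classical.arbitrary X))
  obtain ⟨w, hwr, hwv⟩ := exists_continuousMap_extension_abs_le he hr v hv
  have hint : Integrable (fun t ↦ (u' t - w t) • g t) μ :=
    hg.bdd_smul (r + r) (u' - w).continuous.aestronglyMeasurable
      (.of_forall fun t ↦ (abs_sub _ _).trans (add_le_add (hu' t) (hwr t)))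
  obtain ⟨u, hseg, huw, hlt⟩ :=
    exists_mem_segment_eqOn_norm_integral_sub_smul_lt he.isClosed_range hμ u' w hint hε
  refine ⟨u, fun t ↦ ?_, fun y ↦ (huw (mem_range_self y)).trans (hwv y), hlt⟩
  exact abs_le.2 <| (convex_Icc (-r) r).segment_subset
    (abs_le.1 (hu' t)) (abs_le.1 (hwr t)) (hseg t)

theorem stmt_1 {X : Type*} [MetricSpace X] [CompactSpace X] [Nonempty X]
    [MeasurableSpace X] [BorelSpace X]
    (μ : Measure X) [IsFiniteMeasure μ] (hμ : ∀ x : X, μ {x} = 0)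
    {n : ℕ} (x : Fin n → X) (hx : Function.Injective x)
    (g : C(X, ℝ)) (r : ℝ) (hr : 0 < r)
    (u' : C(X, ℝ)) (hu' : ∀ t : X, |u' t| ≤ r)
    (v : Fin n → ℝ) (hv : ∀ i : Fin n, |v i| ≤ r)
    (ε : ℝ) (hε : 0 < ε) :
    ∃ u : C(X, ℝ), (∀ t : X, |u t| ≤ r) ∧ (∀ i : Fin n, u (x i) = v i) ∧
      |∫ t, (u' t - u t) * g t ∂μ| < ε := by
  have : NullSingletonClass μ := ⟨hμ⟩
  have hg : Integrable g μ :=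
    g.continuous.integrable_of_hasCompactSupport (.of_compactSpace g)
  exact stmt_1_general (continuous_of_discreteTopology.isClosedEmbedding hx)
    ((countable_range x).measure_zero μ) hg u' hu' ⟨v, continuous_of_discreteTopology⟩ hv hε
end

section
/- Let E be a real normed vector space, F a finite-dimensional real normed vector space, and A : E → F a surjective continuous linear map. Suppose d > 0 satisfies ‖v' ∘ A‖ ≥ d for every continuous linear functional v' : F → ℝ with ‖v'‖ = 1. Then for every continuous linear map δA : E → F with operator norm ‖δA‖ < d, the map A + δA is surjective. In particular, the set of surjective continuous linear maps from E to F is open in the operator-norm topology. -/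
/-!
If `A + δA` is not surjective, its range is annihilated by some nonzero functional `v`, because `F`
is finite-dimensional. Then `v ∘ A = -(v ∘ δA)`, hence `d * ‖v‖ ≤ ‖v ∘ A‖ ≤ ‖v‖ * ‖δA‖ < d * ‖v‖`,
a contradiction. Every surjective `B` has a continuous right inverse `S`, and
`‖v‖ = ‖v ∘ B ∘ S‖ ≤ ‖v ∘ B‖ * ‖S‖` bounds `v ↦ v ∘ B` from below; hence surjectivity is open.
-/

open Function

theorem mul_norm_le_norm_map_of_forall_norm_eq_one {V W : Type*}
    [SeminormedAddCommGroup V] [NormedSpace ℝ V] [SeminormedAddCommGroup W] [NormedSpace ℝ W]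
    (f : V →ₗ[ℝ] W) {d : ℝ} (h : ∀ v, ‖v‖ = 1 → d ≤ ‖f v‖) (v : V) : d * ‖v‖ ≤ ‖f v‖ := by
  rcases (norm_nonneg v).eq_or_lt' with hv | hv
  · simp [hv]
  have h_unit : ‖‖v‖⁻¹ • v‖ = 1 := by
    rw [norm_smul, norm_inv, norm_norm, inv_mul_cancel₀ hv.ne']
  rw [← le_div_iff₀ hv]
  calc d ≤ ‖f (‖v‖⁻¹ • v)‖ := h _ h_unit
    _ = ‖f v‖ / ‖v‖ := by rw [map_smul, norm_smul, norm_inv, norm_norm, inv_mul_eq_div]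

section RightInverse

variable {𝕜 E F G : Type*} [NontriviallyNormedField 𝕜]
  [SeminormedAddCommGroup E] [NormedSpace 𝕜 E] [SeminormedAddCommGroup F] [NormedSpace 𝕜 F]
  [SeminormedAddCommGroup G] [NormedSpace 𝕜 G]

theorem norm_le_norm_comp_mul_norm_of_comp_eq_id {A : E →L[𝕜] F} {S : F →L[𝕜] E}
    (hS : A.comp S = .id 𝕜 F) (v : F →L[𝕜] G) : ‖v‖ ≤ ‖v.comp A‖ * ‖S‖ :=
  calc ‖v‖ = ‖(v.comp A).comp S‖ := by
        rw [ContinuousLinearMap.comp_assoc, hS, ContinuousLinearMap.comp_id]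
    _ ≤ ‖v.comp A‖ * ‖S‖ := (v.comp A).opNorm_comp_le S

theorem exists_pos_forall_mul_norm_le_norm_comp_of_comp_eq_id {A : E →L[𝕜] F} {S : F →L[𝕜] E}
    (hS : A.comp S = .id 𝕜 F) :
    ∃ d > 0, ∀ v : F →L[𝕜] G, d * ‖v‖ ≤ ‖v.comp A‖ := by
  -- `‖S‖` itself vanishes when `F` is trivial.
  have h_pos : 0 < ‖S‖ + 1 := by positivity
  refine ⟨(‖S‖ + 1)⁻¹, inv_pos.mpr h_pos, fun v ↦ ?_⟩
  rw [inv_mul_le_iff₀' h_pos]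
  calc ‖v‖ ≤ ‖v.comp A‖ * ‖S‖ := norm_le_norm_comp_mul_norm_of_comp_eq_id hS v
    _ ≤ ‖v.comp A‖ * (‖S‖ + 1) := by gcongr; exact le_add_of_nonneg_right zero_le_one

end RightInverse

theorem surjective_of_forall_comp_eq_zero {𝕜 E F : Type*}
    [NontriviallyNormedField 𝕜] [CompleteSpace 𝕜]
    [AddCommGroup E] [Module 𝕜 E] [TopologicalSpace E]
    [AddCommGroup F] [Module 𝕜 F] [TopologicalSpace F] [IsTopologicalAddGroup F]
    [ContinuousSMul 𝕜 F] [T2Space F] [FiniteDimensional 𝕜 F]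
    {A : E →L[𝕜] F} (h : ∀ v : F →L[𝕜] 𝕜, v.comp A = 0 → v = 0) : Surjective A := by
  refine LinearMap.dualMap_injective_iff.mp <|
    (injective_iff_map_eq_zero A.toLinearMap.dualMap).mpr fun f hf ↦ ?_
  have h_comp : f.toContinuousLinearMap.comp A = 0 := by
    ext x
    exact LinearMap.congr_fun hf x
  exact (LinearEquiv.map_eq_zero_iff LinearMap.toContinuousLinearMap).mp (h _ h_comp)

section Perturbation

variable {𝕜 E F : Type*} [NontriviallyNormedField 𝕜] [CompleteSpace 𝕜]
  [SeminormedAddCommGroup E] [NormedSpace 𝕜 E]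
  [NormedAddCommGroup F] [NormedSpace 𝕜 F] [FiniteDimensional 𝕜 F]

theorem surjective_add_of_norm_lt {A δA : E →L[𝕜] F} {d : ℝ}
    (h_bound : ∀ v : F →L[𝕜] 𝕜, d * ‖v‖ ≤ ‖v.comp A‖) (hδA : ‖δA‖ < d) :
    Surjective (A + δA) := by
  refine surjective_of_forall_comp_eq_zero fun v hv ↦ ?_
  have h_neg : v.comp A = -v.comp δA :=
    eq_neg_of_add_eq_zero_left (by rw [← ContinuousLinearMap.comp_add, hv])
  have h_le : d * ‖v‖ ≤ ‖δA‖ * ‖v‖ :=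
    calc d * ‖v‖ ≤ ‖v.comp A‖ := h_bound v
      _ = ‖v.comp δA‖ := by rw [h_neg, norm_neg]
      _ ≤ ‖v‖ * ‖δA‖ := v.opNorm_comp_le δA
      _ = ‖δA‖ * ‖v‖ := mul_comm _ _
  by_contra h_ne
  exact hδA.not_ge (le_of_mul_le_mul_right h_le (norm_pos_iff.mpr h_ne))

theorem isOpen_setOf_surjective : IsOpen {B : E →L[𝕜] F | Surjective B} := by
  refine Metric.isOpen_iff.mpr fun B hB ↦ ?_
  obtain ⟨S, hS⟩ := B.exists_rightInverse_of_surjective (LinearMap.range_eq_top.mpr hB)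
  obtain ⟨d, hd, h_bound⟩ := exists_pos_forall_mul_norm_le_norm_comp_of_comp_eq_id (G := 𝕜) hS
  refine ⟨d, hd, fun C hC ↦ ?_⟩
  have h_surj : Surjective (B + (C - B)) :=
    surjective_add_of_norm_lt h_bound (mem_ball_iff_norm.mp hC)
  rwa [add_sub_cancel] at h_surj

theorem stmt_3_general (A : E →L[𝕜] F) {d : ℝ}
    (h_bound : ∀ v' : F →L[𝕜] 𝕜, d * ‖v'‖ ≤ ‖v'.comp A‖) :
    (∀ δA : E →L[𝕜] F, ‖δA‖ < d → Surjective (A + δA)) ∧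
    IsOpen {B : E →L[𝕜] F | Surjective B} :=
  ⟨fun _ ↦ surjective_add_of_norm_lt h_bound, isOpen_setOf_surjective⟩

end Perturbation

theorem stmt_3 {E F : Type*} [NormedAddCommGroup E] [NormedSpace ℝ E]
    [NormedAddCommGroup F] [NormedSpace ℝ F] [FiniteDimensional ℝ F]
    (A : E →L[ℝ] F) (hA : Function.Surjective A)
    (d : ℝ) (hd : 0 < d)
    (hbound : ∀ v' : F →L[ℝ] ℝ, ‖v'‖ = 1 → d ≤ ‖v'.comp A‖) :
    (∀ δA : E →L[ℝ] F, ‖δA‖ < d → Function.Surjective (A + δA)) ∧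
    IsOpen {B : E →L[ℝ] F | Function.Surjective B} :=
  stmt_3_general A fun v' ↦
    mul_norm_le_norm_map_of_forall_norm_eq_one (A.precomp ℝ).toLinearMap hbound v'
end

section
/- Let E be a real normed vector space, F and G finite-dimensional real normed vector spaces, A : E → F a surjective continuous linear map, and B : E → G a continuous linear map. Then there exists a continuous map f : F → G such that f(A u) = B u for all u ∈ E if and only if for every continuous linear functional w' : G → ℝ there exists a continuous linear functional v' : F → ℝ with w' ∘ B = v' ∘ A (that is, if and only if the image of the dual map of B is contained in the image of the dual map of A). -/
/-! Both conditions say that `ker A ≤ ker B`. A function `f` with `f ∘ A = B` forces this inclusion;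
conversely the inclusion yields a linear factor on the range of `A`, which extends linearly to all
of `F` and is then continuous because `F` is finite-dimensional. The same factorization applied to
each functional `w' ∘ B` turns the condition on duals into `ker A ≤ ker (w' ∘ B)` for all `w'`,
which is the inclusion again, because functionals separate the points of `G`. -/

open Function LinearMap

theorem ker_le_ker_of_factorsThrough {R E F G : Type*} [Semiring R]
    [AddCommMonoid E] [Module R E] [AddCommMonoid F] [Module R F] [AddCommMonoid G] [Module R G]
    {A : E →ₗ[R] F} {B : E →ₗ[R] G} (h : FactorsThrough B A) : ker A ≤ ker B :=
  fun _ hu ↦ (h (hu.trans A.map_zero.symm)).trans B.map_zero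

theorem exists_linearMap_comp_eq_of_ker_le_ker {K E F G : Type*} [DivisionRing K]
    [AddCommGroup E] [Module K E] [AddCommGroup F] [Module K F] [AddCommGroup G] [Module K G]
    {A : E →ₗ[K] F} {B : E →ₗ[K] G} (h : ker A ≤ ker B) :
    ∃ T : F →ₗ[K] G, T ∘ₗ A = B := by
  obtain ⟨T, hT⟩ := exists_extend ((ker A).liftQ B h ∘ₗ A.quotKerEquivRange.symm.toLinearMap)
  refine ⟨T, LinearMap.ext fun u ↦ ?_⟩
  calc T (A u)
    _ = (ker A).liftQ B h (A.quotKerEquivRange.symm (A.rangeRestrict u)) :=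
      LinearMap.congr_fun hT (A.rangeRestrict u)
    _ = (ker A).liftQ B h ((ker A).mkQ u) :=
      congrArg _ (A.quotKerEquivRange_symm_apply_image u _)
    _ = B u := Submodule.liftQ_apply ..

theorem forall_le_ker_dual_comp_iff {R E G : Type*} [Ring R] [TopologicalSpace R]
    [AddCommMonoid E] [Module R E]
    [AddCommGroup G] [Module R G] [TopologicalSpace G] [SeparatingDual R G]
    {p : Submodule R E} {B : E →ₗ[R] G} :
    (∀ w' : StrongDual R G, p ≤ ker (w'.toLinearMap ∘ₗ B)) ↔ p ≤ ker B := by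
  refine ⟨fun h u hu ↦ ?_, fun h w' ↦ h.trans (ker_le_ker_comp B w'.toLinearMap)⟩
  exact SeparatingDual.eq_zero_of_forall_dual_eq_zero (R := R) fun w' ↦ h w' hu

section FiniteDimensional

variable {𝕜 E F G : Type*} [NontriviallyNormedField 𝕜] [CompleteSpace 𝕜]
  [AddCommGroup E] [Module 𝕜 E]
  [AddCommGroup F] [Module 𝕜 F] [TopologicalSpace F] [IsTopologicalAddGroup F]
  [ContinuousSMul 𝕜 F] [T2Space F] [FiniteDimensional 𝕜 F]
  [AddCommGroup G] [Module 𝕜 G] [TopologicalSpace G] [IsTopologicalAddGroup G]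
  [ContinuousSMul 𝕜 G]

theorem exists_continuousLinearMap_comp_eq_iff_ker_le_ker {A : E →ₗ[𝕜] F} {B : E →ₗ[𝕜] G} :
    (∃ T : F →L[𝕜] G, T.toLinearMap ∘ₗ A = B) ↔ ker A ≤ ker B := by
  refine ⟨?_, fun h ↦ ?_⟩
  · rintro ⟨T, rfl⟩
    exact ker_le_ker_comp A T.toLinearMap
  · obtain ⟨T, hT⟩ := exists_linearMap_comp_eq_of_ker_le_ker h
    exact ⟨T.toContinuousLinearMap, hT⟩

theorem exists_continuous_comp_eq_iff_ker_le_ker {A : E →ₗ[𝕜] F} {B : E →ₗ[𝕜] G} :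
    (∃ f : F → G, Continuous f ∧ ∀ u, f (A u) = B u) ↔ ker A ≤ ker B := by
  refine ⟨?_, fun h ↦ ?_⟩
  · rintro ⟨f, -, hf⟩
    refine ker_le_ker_of_factorsThrough fun u v huv ↦ ?_
    rw [← hf, huv, hf]
  · obtain ⟨T, hT⟩ := exists_continuousLinearMap_comp_eq_iff_ker_le_ker.2 h
    exact ⟨T, T.continuous, LinearMap.congr_fun hT⟩

theorem stmt_6_general [SeparatingDual 𝕜 G] (A : E →ₗ[𝕜] F) (B : E →ₗ[𝕜] G) :
    (∃ f : F → G, Continuous f ∧ ∀ u, f (A u) = B u) ↔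
      ∀ w' : StrongDual 𝕜 G, ∃ v' : StrongDual 𝕜 F,
        w'.toLinearMap ∘ₗ B = v'.toLinearMap ∘ₗ A :=
  calc
    (∃ f : F → G, Continuous f ∧ ∀ u, f (A u) = B u)
    _ ↔ ker A ≤ ker B := exists_continuous_comp_eq_iff_ker_le_ker
    _ ↔ ∀ w' : StrongDual 𝕜 G, ker A ≤ ker (w'.toLinearMap ∘ₗ B) :=
      forall_le_ker_dual_comp_iff.symm
    _ ↔ _ := by
      simp only [← exists_continuousLinearMap_comp_eq_iff_ker_le_ker, eq_comm]

end FiniteDimensional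

theorem stmt_6 {E F G : Type*} [NormedAddCommGroup E] [NormedSpace ℝ E]
    [NormedAddCommGroup F] [NormedSpace ℝ F] [FiniteDimensional ℝ F]
    [NormedAddCommGroup G] [NormedSpace ℝ G] [FiniteDimensional ℝ G]
    (A : E →L[ℝ] F) (hA : Function.Surjective A) (B : E →L[ℝ] G) :
    (∃ f : F → G, Continuous f ∧ ∀ u : E, f (A u) = B u) ↔
      ∀ w' : G →L[ℝ] ℝ, ∃ v' : F →L[ℝ] ℝ, w'.comp B = v'.comp A := by
  simpa [← ContinuousLinearMap.coe_inj] using stmt_6_general A.toLinearMap B.toLinearMap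
end

section
/- Let E be an infinite-dimensional real normed vector space, F and G finite-dimensional real normed vector spaces, and A : E → F, B : E → G surjective continuous linear maps satisfying the transversality condition: for all continuous linear functionals v' : F → ℝ and w' : G → ℝ, if v' ∘ A = w' ∘ B then v' ∘ A = 0. Then for every v ∈ F and every w ∈ G the set {u ∈ E : A u = v and B u = w} is infinite; in particular the joint map u ↦ (A u, B u) from E to F × G is surjective with nontrivial kernel. -/
/-!
The ranges of the dual maps of `A` and `B` are the annihilators of `ker A` and `ker B`, so
transversality says that the annihilator of `ker A + ker B` vanishes, i.e. `ker A + ker B = E`.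
Two surjections whose kernels span the source are jointly surjective, and by counting dimensions
the joint map has a nonzero kernel, of which every fiber is a translate.
-/

open Module

section Linear

universe u v w

variable {R : Type u} {M : Type v} {N : Type w} [Ring R] [AddCommGroup M] [Module R M]
  [AddCommGroup N] [Module R N]

theorem ker_ne_bot_of_lift_rank_lt [Nontrivial R] {f : M →ₗ[R] N}
    (h : Cardinal.lift.{v} (Module.rank R N) < Cardinal.lift.{w} (Module.rank R M)) :
    LinearMap.ker f ≠ ⊥ := fun hker =>
  h.not_ge (f.lift_rank_le_of_injective (LinearMap.ker_eq_bot.mp hker))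

theorem infinite_preimage_singleton_of_ker_ne_bot [IsDomain R] [Infinite R] [IsTorsionFree R M]
    {f : M →ₗ[R] N} (hf : LinearMap.ker f ≠ ⊥) {y : N} (hy : y ∈ Set.range f) :
    (f ⁻¹' {y}).Infinite := by
  obtain ⟨x, rfl⟩ := hy
  obtain ⟨k, hk, hk0⟩ := Submodule.exists_mem_ne_zero_of_ne_bot hf
  have hline : Set.range (fun r : R => x + r • k) ⊆ f ⁻¹' {f x} := by
    rintro _ ⟨r, rfl⟩
    simp [LinearMap.mem_ker.mp hk]
  exact ((infinite_range_add_smul_iff x k).mpr hk0).mono hline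

end Linear

section DualMap

variable {K U V W : Type*} [Field K] [AddCommGroup U] [Module K U] [AddCommGroup V] [Module K V]
  [AddCommGroup W] [Module K W] {f : U →ₗ[K] V} {g : U →ₗ[K] W}

theorem disjoint_range_dualMap_iff_ker_sup_ker_eq_top :
    Disjoint (LinearMap.range f.dualMap) (LinearMap.range g.dualMap) ↔
      LinearMap.ker f ⊔ LinearMap.ker g = ⊤ := by
  rw [LinearMap.range_dualMap_eq_dualAnnihilator_ker,
    LinearMap.range_dualMap_eq_dualAnnihilator_ker, disjoint_iff,
    ← Submodule.dualAnnihilator_sup_eq, Submodule.dualAnnihilator_eq_bot_iff]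

theorem prod_surjective_of_disjoint_range_dualMap (hf : Function.Surjective f)
    (hg : Function.Surjective g)
    (h : Disjoint (LinearMap.range f.dualMap) (LinearMap.range g.dualMap)) :
    Function.Surjective (f.prod g) := by
  rw [← LinearMap.range_eq_top,
    LinearMap.range_prod_eq (disjoint_range_dualMap_iff_ker_sup_ker_eq_top.mp h),
    LinearMap.range_eq_top.mpr hf, LinearMap.range_eq_top.mpr hg, Submodule.prod_top]

end DualMap

section Continuous

variable {𝕜 E F G : Type*} [NontriviallyNormedField 𝕜] [CompleteSpace 𝕜]
  [AddCommGroup E] [Module 𝕜 E] [TopologicalSpace E]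
  [AddCommGroup F] [Module 𝕜 F] [TopologicalSpace F] [IsTopologicalAddGroup F]
  [ContinuousSMul 𝕜 F] [T2Space F] [FiniteDimensional 𝕜 F]
  [AddCommGroup G] [Module 𝕜 G] [TopologicalSpace G] [IsTopologicalAddGroup G]
  [ContinuousSMul 𝕜 G] [T2Space G] [FiniteDimensional 𝕜 G]

theorem disjoint_range_dualMap_of_continuous_dual {A : E →L[𝕜] F} {B : E →L[𝕜] G}
    (htrans : ∀ (v' : F →L[𝕜] 𝕜) (w' : G →L[𝕜] 𝕜), v'.comp A = w'.comp B → v'.comp A = 0) :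
    Disjoint (LinearMap.range (A : E →ₗ[𝕜] F).dualMap)
      (LinearMap.range (B : E →ₗ[𝕜] G).dualMap) := by
  rw [Submodule.disjoint_def]
  rintro _ ⟨φ, rfl⟩ ⟨ψ, hψ⟩
  have hcomp : φ.toContinuousLinearMap.comp A = ψ.toContinuousLinearMap.comp B :=
    ContinuousLinearMap.ext fun u => (LinearMap.congr_fun hψ u).symm
  exact LinearMap.ext fun u => DFunLike.congr_fun (htrans _ _ hcomp) u

theorem stmt_8_general (hE : (finrank 𝕜 (F × G) : Cardinal) < Module.rank 𝕜 E)
    (A : E →L[𝕜] F) (hA : Function.Surjective A)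
    (B : E →L[𝕜] G) (hB : Function.Surjective B)
    (htrans : ∀ (v' : F →L[𝕜] 𝕜) (w' : G →L[𝕜] 𝕜),
      v'.comp A = w'.comp B → v'.comp A = 0) :
    (∀ (v : F) (w : G), {u : E | A u = v ∧ B u = w}.Infinite) ∧
    Function.Surjective (fun u : E => (A u, B u)) ∧
    (∃ u : E, u ≠ 0 ∧ A u = 0 ∧ B u = 0) := by
  let L : E →ₗ[𝕜] F × G := (A : E →ₗ[𝕜] F).prod (B : E →ₗ[𝕜] G)
  have hsurj : Function.Surjective L := prod_surjective_of_disjoint_range_dualMap hA hB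
    (disjoint_range_dualMap_of_continuous_dual htrans)
  have hker : LinearMap.ker L ≠ ⊥ := by
    apply ker_ne_bot_of_lift_rank_lt
    rw [← finrank_eq_rank, Cardinal.lift_natCast]
    simpa using Cardinal.lift_lt.mpr hE
  have : Infinite 𝕜 := NontriviallyNormedField.infinite 𝕜
  refine ⟨fun v w => ?_, hsurj, ?_⟩
  · simpa [L, Set.preimage, Prod.ext_iff] using
      infinite_preimage_singleton_of_ker_ne_bot hker (hsurj (v, w))
  · obtain ⟨u, hu, hu0⟩ := Submodule.exists_mem_ne_zero_of_ne_bot hker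
    exact ⟨u, hu0, Prod.mk_eq_zero.mp hu⟩

end Continuous

theorem stmt_8 {E F G : Type*} [NormedAddCommGroup E] [NormedSpace ℝ E]
    [NormedAddCommGroup F] [NormedSpace ℝ F] [FiniteDimensional ℝ F]
    [NormedAddCommGroup G] [NormedSpace ℝ G] [FiniteDimensional ℝ G]
    (hE : ¬ FiniteDimensional ℝ E)
    (A : E →L[ℝ] F) (hA : Function.Surjective A)
    (B : E →L[ℝ] G) (hB : Function.Surjective B)
    (htrans : ∀ (v' : F →L[ℝ] ℝ) (w' : G →L[ℝ] ℝ),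
      v'.comp A = w'.comp B → v'.comp A = 0) :
    (∀ (v : F) (w : G), {u : E | A u = v ∧ B u = w}.Infinite) ∧
    Function.Surjective (fun u : E => (A u, B u)) ∧
    (∃ u : E, u ≠ 0 ∧ A u = 0 ∧ B u = 0) :=
  stmt_8_general (Cardinal.natCast_lt_aleph0.trans_le
    (not_lt.mp (mt Module.rank_lt_aleph0_iff.mp hE))) A hA B hB htrans
end

section
/- Let A : E → F be a surjective continuous linear map, B : E → G a continuous linear map, and S : F → F the inverse of the bijective map A ∘ A*. For a continuous linear map C : F → G define J(C) = tr[(B − C∘A) ∘ (B − C∘A)*], the trace of the endomorphism (B − C∘A)(B − C∘A)* of the finite-dimensional space G. Then C₀ = B ∘ A* ∘ S satisfies J(C₀) ≤ J(C) for every continuous linear map C : F → G, with equality if and only if C = C₀; that is, C = B A*(A A*)⁻¹ is the unique minimiser of J. -/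
open ContinuousLinearMap

/-!
Let `C₀` solve the normal equation `C₀ A A* = B A*`. Then the residual `R = B - C₀ A` satisfies
`R A* = 0`, so in `B - C A = R + (C₀ - C) A` the cross terms of `(B - C A) (B - C A)*` vanish and
`J(C) = J(C₀) + tr [((C₀ - C) A) ((C₀ - C) A)*]`. The last trace is nonnegative, and it vanishes
only if `(C₀ - C) A = 0`, that is, `C = C₀` as soon as the range of `A` is dense.
-/

theorem comp_right_inj_of_denseRange {R M N P : Type*} [Semiring R]
    [TopologicalSpace M] [AddCommMonoid M] [Module R M]
    [TopologicalSpace N] [AddCommMonoid N] [Module R N]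
    [TopologicalSpace P] [AddCommMonoid P] [Module R P] [T2Space P]
    {f : M →L[R] N} (hf : DenseRange f) {g h : N →L[R] P} :
    g ∘L f = h ∘L f ↔ g = h :=
  ⟨fun hgh => DFunLike.coe_injective <|
    hf.equalizer g.continuous h.continuous (congrArg DFunLike.coe hgh), fun hgh => hgh ▸ rfl⟩

section BackusGilbert

open scoped InnerProduct ComplexOrder

variable {𝕜 E F G : Type*} [RCLike 𝕜]
  [NormedAddCommGroup E] [InnerProductSpace 𝕜 E]
  [NormedAddCommGroup F] [InnerProductSpace 𝕜 F]
  [NormedAddCommGroup G] [InnerProductSpace 𝕜 G]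

theorem trace_eq_zero_iff_of_isPositive [FiniteDimensional 𝕜 G] {T : G →ₗ[𝕜] G}
    (hT : T.IsPositive) : LinearMap.trace 𝕜 G T = 0 ↔ T = 0 := by
  let b := stdOrthonormalBasis 𝕜 G
  have hM : (T.toMatrix b.toBasis b.toBasis).PosSemidef :=
    (LinearMap.posSemidef_toMatrix_iff b).mpr hT
  rw [LinearMap.trace_eq_matrix_trace 𝕜 b.toBasis, hM.trace_eq_zero_iff,
    LinearEquiv.map_eq_zero_iff]

variable [CompleteSpace E] [CompleteSpace G]

theorem self_comp_adjoint_eq_zero_iff {T : E →L[𝕜] G} : T ∘L T† = 0 ↔ T = 0 := by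
  refine ⟨fun h => ?_, fun h => by rw [h, zero_comp]⟩
  have hker : (T†).ker = ⊤ := by
    rw [← ker_self_comp_adjoint, h]
    exact LinearMap.ker_zero
  have hadj : T† = 0 := coe_injective (LinearMap.ker_eq_top.mp hker)
  exact (LinearIsometryEquiv.map_eq_zero_iff adjoint).mp hadj

theorem trace_self_comp_adjoint_eq_zero_iff [FiniteDimensional 𝕜 G] {T : E →L[𝕜] G} :
    LinearMap.trace 𝕜 G (T ∘L T† : G →L[𝕜] G) = 0 ↔ T = 0 := by
  rw [trace_eq_zero_iff_of_isPositive (isPositive_self_comp_adjoint T).toLinearMap,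
    ← self_comp_adjoint_eq_zero_iff, ← toLinearMap_zero, coe_inj]

theorem add_comp_adjoint_add_of_comp_adjoint_eq_zero {R D : E →L[𝕜] G} (h : R ∘L D† = 0) :
    (R + D) ∘L (R + D)† = R ∘L R† + D ∘L D† := by
  have h' : D ∘L R† = 0 := by
    simpa only [adjoint_comp, adjoint_adjoint, map_zero] using congrArg adjoint h
  simp only [map_add, add_comp, comp_add, h, h', add_zero, zero_add]

/-- The J-functional of optimal Backus–Gilbert estimation: the trace of `T T*` for the residual
`T = B - C A` of the estimator `C`. It takes values in `𝕜`, where `z ≤ w` means that `w - z` is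
real and nonnegative, and it is meaningful for finite-dimensional `G`. -/
noncomputable def jFunctional (A : E →L[𝕜] F) (B : E →L[𝕜] G) (C : F →L[𝕜] G) : 𝕜 :=
  LinearMap.trace 𝕜 G ((B - C ∘L A) ∘L (B - C ∘L A)† : G →L[𝕜] G)

variable [CompleteSpace F] {A : E →L[𝕜] F} {B : E →L[𝕜] G} {C₀ : F →L[𝕜] G}

theorem jFunctional_eq_add_trace (hC₀ : C₀ ∘L A ∘L A† = B ∘L A†) (C : F →L[𝕜] G) :
    jFunctional A B C = jFunctional A B C₀ +
      LinearMap.trace 𝕜 G (((C₀ - C) ∘L A) ∘L ((C₀ - C) ∘L A)† : G →L[𝕜] G) := by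
  have horth : (B - C₀ ∘L A) ∘L ((C₀ - C) ∘L A)† = 0 := by
    rw [adjoint_comp, ← comp_assoc, sub_comp, comp_assoc C₀, hC₀, sub_self, zero_comp]
  have hsplit : B - C ∘L A = (B - C₀ ∘L A) + (C₀ - C) ∘L A := by
    rw [sub_comp, sub_add_sub_cancel]
  rw [jFunctional, hsplit, add_comp_adjoint_add_of_comp_adjoint_eq_zero horth, toLinearMap_add,
    map_add, jFunctional]

theorem jFunctional_le (hC₀ : C₀ ∘L A ∘L A† = B ∘L A†) (C : F →L[𝕜] G) :
    jFunctional A B C₀ ≤ jFunctional A B C := by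
  rw [jFunctional_eq_add_trace hC₀ C]
  exact le_add_of_nonneg_right (isPositive_self_comp_adjoint _).toLinearMap.trace_nonneg

theorem jFunctional_eq_iff [FiniteDimensional 𝕜 G] (hA : DenseRange A)
    (hC₀ : C₀ ∘L A ∘L A† = B ∘L A†) (C : F →L[𝕜] G) :
    jFunctional A B C₀ = jFunctional A B C ↔ C = C₀ := by
  rw [jFunctional_eq_add_trace hC₀ C, left_eq_add, trace_self_comp_adjoint_eq_zero_iff, sub_comp,
    sub_eq_zero, comp_right_inj_of_denseRange hA, eq_comm]

theorem stmt_17_general [FiniteDimensional 𝕜 G] (hA : DenseRange A)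
    (hC₀ : C₀ ∘L A ∘L A† = B ∘L A†) (C : F →L[𝕜] G) :
    jFunctional A B C₀ ≤ jFunctional A B C ∧
      (jFunctional A B C₀ = jFunctional A B C ↔ C = C₀) :=
  ⟨jFunctional_le hC₀ C, jFunctional_eq_iff hA hC₀ C⟩

end BackusGilbert

theorem stmt_17 {E F G : Type*}
    [NormedAddCommGroup E] [InnerProductSpace ℝ E] [CompleteSpace E]
    [NormedAddCommGroup F] [InnerProductSpace ℝ F] [FiniteDimensional ℝ F]
    [NormedAddCommGroup G] [InnerProductSpace ℝ G] [FiniteDimensional ℝ G]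
    (A : E →L[ℝ] F) (hA : Function.Surjective A) (B : E →L[ℝ] G)
    (S : F →L[ℝ] F)
    (hS₁ : ∀ v : F, A (adjoint A (S v)) = v)
    (hS₂ : ∀ v : F, S (A (adjoint A v)) = v) :
    ∀ C : F →L[ℝ] G,
      LinearMap.trace ℝ G
          (((B - ((B.comp (adjoint A)).comp S).comp A).comp
            (adjoint (B - ((B.comp (adjoint A)).comp S).comp A)) : G →L[ℝ] G) : G →ₗ[ℝ] G)
        ≤ LinearMap.trace ℝ G
            (((B - C.comp A).comp (adjoint (B - C.comp A)) : G →L[ℝ] G) : G →ₗ[ℝ] G) ∧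
      (LinearMap.trace ℝ G
          (((B - ((B.comp (adjoint A)).comp S).comp A).comp
            (adjoint (B - ((B.comp (adjoint A)).comp S).comp A)) : G →L[ℝ] G) : G →ₗ[ℝ] G)
        = LinearMap.trace ℝ G
            (((B - C.comp A).comp (adjoint (B - C.comp A)) : G →L[ℝ] G) : G →ₗ[ℝ] G)
        ↔ C = (B.comp (adjoint A)).comp S) := by
  have hnormal : (B ∘L adjoint A ∘L S) ∘L A ∘L adjoint A = B ∘L adjoint A := by
    ext v
    simp only [comp_apply, hS₂]
  exact stmt_17_general hA.denseRange hnormal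
end
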